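/- Let k ≥ 2 and r ≥ 0 be fixed integers, let n ≥ 3000·(r+1)³·(k+r)·k², and let δ ∈ [150k³(r+1)²/n, 1 − 150k³(r+1)³/n] ∪ {1} be such that M := Σ_{i=1}^{r} C(n−i, k−1) + δ·C(n−(r+1), k−1) is an integer. Suppose F ⊆ C([n],k) has |F| = M and satisfies I(F) = MI(F). If F does not contain any full 1-star, then F has a cover A ⊆ [n] of size r+1, i.e. a set A with |A| = r+1 such that A ∩ F ≠ ∅ for every F ∈ F. -/

import Mathlib

open Finset

/-- The total intersection of a family: `I(F) = ∑_{A∈F} ∑_{B∈F} |A ∩ B|`. -/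
def totalInt (F : Finset (Finset ℕ)) : ℕ :=
  ∑ A ∈ F, ∑ B ∈ F, (A ∩ B).card

/-- The degree of a set `S` in the family `F`: the number of members of `F` containing `S`. -/
def degF (F : Finset (Finset ℕ)) (S : Finset ℕ) : ℕ :=
  (F.filter fun A => S ⊆ A).card

/-- `A` strictly precedes `B` in the lexicographic order on finite sets of positive integers:
the minimal element of the symmetric difference `A Δ B` belongs to `A`. -/
def lexLt (A B : Finset ℕ) : Prop :=
  ∃ m ∈ A \ B, ∀ x ∈ (A \ B) ∪ (B \ A), m ≤ x

/-- `S` is an initial segment (prefix) of the `k`-element subsets of `[n] = {1,…,n}`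
under the lexicographic order. -/
def IsLexPrefix (n k : ℕ) (S : Finset (Finset ℕ)) : Prop :=
  S ⊆ (Icc 1 n).powersetCard k ∧
    ∀ A ∈ S, ∀ B ∈ (Icc 1 n).powersetCard k, lexLt B A → B ∈ S

/-- The cardinality of the family `L_{n,k,t}^{(r)}`:
`C(n−t+1, k−t+1) − C(n−(t+r−1), k−t+1)`. -/
def lexStarCard (n k t r : ℕ) : ℕ :=
  (n - t + 1).choose (k - t + 1) - (n - (t + r - 1)).choose (k - t + 1)

/-- The full `t`-star with core `Y`: all `k`-subsets of `[n]` containing `Y`. -/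
def fullStar (n k : ℕ) (Y : Finset ℕ) : Finset (Finset ℕ) :=
  ((Icc 1 n).powersetCard k).filter fun A => Y ⊆ A

/-- The constant `C_s = 2^{2^{s−1}−1} · 10^{2^{s+2}−2} · (k² t⁴ (r+1)⁷)^{2^{s−1}}`. -/
def Cconst (k t r s : ℕ) : ℕ :=
  2 ^ (2 ^ (s - 1) - 1) * 10 ^ (2 ^ (s + 2) - 2) * (k ^ 2 * t ^ 4 * (r + 1) ^ 7) ^ (2 ^ (s - 1))

/-- degree of a vertex -/
def dg (F : Finset (Finset ℕ)) (x : ℕ) : ℕ := (F.filter fun A => x ∈ A).card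

lemma sum_dg (F : Finset (Finset ℕ)) (S : Finset ℕ) :
    ∑ x ∈ S, dg F x = ∑ A ∈ F, (A ∩ S).card := by
  unfold dg
  simp only [card_filter]
  rw [sum_comm]
  refine sum_congr rfl fun A _ => ?_
  rw [← card_filter, inter_comm, filter_mem_eq_inter]

lemma totalInt_eq (V : Finset ℕ) (F : Finset (Finset ℕ)) (hF : ∀ A ∈ F, A ⊆ V) :
    totalInt F = ∑ x ∈ V, dg F x ^ 2 := by
  unfold totalInt
  have h1 : ∀ A ∈ F, ∑ B ∈ F, (A ∩ B).card = ∑ x ∈ V, if x ∈ A then dg F x else 0 := by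
    intro A hA
    rw [← sum_filter, filter_mem_eq_inter, inter_eq_right.2 (hF A hA), sum_dg]
    exact sum_congr rfl fun B _ => by rw [inter_comm]
  rw [sum_congr rfl h1, sum_comm]
  refine sum_congr rfl fun x _ => ?_
  rw [← sum_filter, sum_const, smul_eq_mul, sq]
  rfl

lemma codeg_le (n k : ℕ) (hk : 2 ≤ k) (F : Finset (Finset ℕ))
    (hF : F ⊆ (Icc 1 n).powersetCard k) (x y : ℕ) (hxy : x ≠ y) :
    (F.filter fun A => x ∈ A ∧ y ∈ A).card ≤ (n - 2).choose (k - 2) := by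
  by_cases hx : x ∈ Icc 1 n ∧ y ∈ Icc 1 n
  · have hc : (((Icc 1 n).erase x).erase y).card = n - 2 := by
      rw [card_erase_of_mem (mem_erase.2 ⟨hxy.symm, hx.2⟩), card_erase_of_mem hx.1]
      simp; omega
    rw [← hc, ← card_powersetCard]
    apply card_le_card_of_injOn (fun A => (A.erase x).erase y)
    · intro A hA
      simp only [coe_filter, Set.mem_ofPred_eq] at hA
      obtain ⟨hA, hxA, hyA⟩ := hA
      have := mem_powersetCard.1 (hF hA)
      simp only [mem_coe, mem_powersetCard]
      refine ⟨erase_subset_erase _ (erase_subset_erase _ this.1), ?_⟩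
      rw [card_erase_of_mem (mem_erase.2 ⟨hxy.symm, hyA⟩), card_erase_of_mem hxA]
      omega
    · intro A hA B hB h
      simp only [coe_filter, Set.mem_ofPred_eq] at hA hB
      have h2 : insert x (insert y ((A.erase x).erase y)) = insert x (insert y ((B.erase x).erase y)) := by
        simp only at h
        rw [h]
      rwa [insert_erase (mem_erase.2 ⟨hxy.symm, hA.2.2⟩), insert_erase hA.2.1,
        insert_erase (mem_erase.2 ⟨hxy.symm, hB.2.2⟩), insert_erase hB.2.1] at h2
  · rw [filter_false_of_mem]
    · simp
    · intro A hA h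
      have := (mem_powersetCard.1 (hF hA)).1
      exact hx ⟨this h.1, this h.2⟩

lemma sum_dg_le (n k : ℕ) (hk : 2 ≤ k) (F : Finset (Finset ℕ))
    (hF : F ⊆ (Icc 1 n).powersetCard k) (S : Finset ℕ) :
    2 * ∑ x ∈ S, dg F x ≤ 2 * F.card + S.card ^ 2 * (n - 2).choose (k - 2) := by
  set D := (n - 2).choose (k - 2)
  have h1 : ∑ A ∈ F, (A ∩ S).card ^ 2 ≤ ∑ x ∈ S, dg F x + S.card ^ 2 * D := by
    have e : ∑ A ∈ F, (A ∩ S).card ^ 2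
        = ∑ x ∈ S, ∑ y ∈ S, (F.filter fun A => x ∈ A ∧ y ∈ A).card := by
      simp only [card_filter]
      rw [sum_congr rfl fun x _ => sum_comm, sum_comm]
      refine sum_congr rfl fun A _ => ?_
      rw [inter_comm, ← filter_mem_eq_inter, sq, card_filter, sum_mul_sum]
      refine sum_congr rfl fun x _ => sum_congr rfl fun y _ => ?_
      split_ifs <;> simp_all
    rw [e]
    calc _ ≤ ∑ x ∈ S, (dg F x + S.card * D) := by
          refine sum_le_sum fun x hx => ?_
          rw [← add_sum_erase _ _ hx]
          apply add_le_add
          · simp [dg]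
          · calc _ ≤ ∑ y ∈ S.erase x, D := sum_le_sum fun y hy =>
                  codeg_le n k hk F hF x y (ne_of_mem_erase hy).symm
              _ ≤ ∑ y ∈ S, D := sum_le_sum_of_subset (erase_subset _ _)
              _ = _ := by simp
      _ = _ := by rw [sum_add_distrib]; simp [sq, mul_assoc]
  have h2 : 3 * ∑ A ∈ F, (A ∩ S).card ≤ ∑ A ∈ F, (A ∩ S).card ^ 2 + 2 * F.card := by
    rw [mul_sum, show 2 * F.card = ∑ A ∈ F, 2 by simp [mul_comm], ← sum_add_distrib]
    refine sum_le_sum fun A _ => ?_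
    generalize (A ∩ S).card = j
    rcases Nat.lt_or_ge j 2 with h | h
    · interval_cases j <;> simp
    · obtain ⟨i, rfl⟩ := Nat.exists_eq_add_of_le h
      nlinarith
  rw [← sum_dg] at h2
  omega

lemma meet_le (n k : ℕ) (hk : 2 ≤ k) (F : Finset (Finset ℕ))
    (hF : F ⊆ (Icc 1 n).powersetCard k) (S : Finset ℕ) (x : ℕ) (hx : x ∉ S) :
    (F.filter fun A => x ∈ A ∧ (A ∩ S).Nonempty).card ≤ S.card * (n - 2).choose (k - 2) := by
  calc _ ≤ (S.biUnion fun y => F.filter fun A => x ∈ A ∧ y ∈ A).card := by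
        apply card_le_card
        intro A hA
        simp only [mem_filter, mem_biUnion] at hA ⊢
        obtain ⟨hA, hxA, y, hy⟩ := hA
        rw [mem_inter] at hy
        exact ⟨y, hy.2, hA, hxA, hy.1⟩
    _ ≤ ∑ y ∈ S, (n - 2).choose (k - 2) := by
        refine card_biUnion_le.trans (sum_le_sum fun y hy => codeg_le n k hk F hF x y ?_)
        rintro rfl; exact hx hy
    _ = _ := by simp

lemma swap_le (n k : ℕ) (F : Finset (Finset ℕ))
    (hF : F ⊆ (Icc 1 n).powersetCard k)
    (hopt : ∀ G ⊆ (Icc 1 n).powersetCard k, G.card = F.card → totalInt G ≤ totalInt F)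
    (A B : Finset ℕ) (hA : A ∈ F) (hB : B ∈ (Icc 1 n).powersetCard k) (hBF : B ∉ F) :
    ∑ x ∈ B, dg F x ≤ ∑ x ∈ A, dg F x := by
  set G := insert B (F.erase A) with hG
  have hBG : B ∉ F.erase A := fun h => hBF (mem_of_mem_erase h)
  have hGs : G ⊆ (Icc 1 n).powersetCard k :=
    insert_subset hB ((erase_subset _ _).trans hF)
  have hGc : G.card = F.card := by
    rw [hG, card_insert_of_notMem hBG, card_erase_of_mem hA]
    have := card_pos.2 ⟨A, hA⟩
    omega
  have h := hopt G hGs hGc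
  rw [totalInt_eq (Icc 1 n) G fun A hA => (mem_powersetCard.1 (hGs hA)).1,
    totalInt_eq (Icc 1 n) F fun A hA => (mem_powersetCard.1 (hF hA)).1] at h
  have hd : ∀ x, (dg G x : ℤ) = dg F x + ((if x ∈ B then 1 else 0) - (if x ∈ A then 1 else 0)) := by
    intro x
    have e1 : dg G x = (if x ∈ B then 1 else 0) + dg (F.erase A) x := by
      unfold dg
      rw [card_filter, hG, sum_insert hBG, card_filter]
    have e2 : dg F x = (if x ∈ A then 1 else 0) + dg (F.erase A) x := by
      unfold dg
      rw [card_filter, card_filter, add_sum_erase F (fun A => if x ∈ A then 1 else 0) hA]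
    rw [e1, e2]; push_cast; ring
  have h' : (∑ x ∈ Icc 1 n, (dg G x : ℤ) ^ 2) ≤ ∑ x ∈ Icc 1 n, (dg F x : ℤ) ^ 2 := by
    exact_mod_cast h
  have key : ∀ C ∈ (Icc 1 n).powersetCard k,
      (∑ x ∈ C, dg F x : ℤ) = ∑ x ∈ Icc 1 n, (dg F x : ℤ) * (if x ∈ C then 1 else 0) := by
    intro C hC
    simp only [mul_ite, mul_one, mul_zero]
    rw [← sum_filter, filter_mem_eq_inter, inter_eq_right.2 (mem_powersetCard.1 hC).1]
  have hlow : (∑ x ∈ Icc 1 n, (dg F x : ℤ) ^ 2) + 2 * (∑ x ∈ B, dg F x : ℤ)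
      - 2 * (∑ x ∈ A, dg F x : ℤ) ≤ ∑ x ∈ Icc 1 n, (dg G x : ℤ) ^ 2 := by
    rw [key A (hF hA), key B hB, mul_sum, mul_sum, ← sum_add_distrib, ← sum_sub_distrib]
    refine sum_le_sum fun x _ => ?_
    rw [hd]
    nlinarith [sq_nonneg (((if x ∈ B then 1 else 0) - (if x ∈ A then 1 else 0) : ℤ))]
  have : (∑ x ∈ B, dg F x : ℤ) ≤ (∑ x ∈ A, dg F x : ℤ) := by linarith
  exact_mod_cast this

lemma choose_tele (n k : ℕ) (hk : 1 ≤ k) (R : ℕ) (hR : R ≤ n) :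
    ∑ i ∈ Icc 1 R, (n - i).choose (k - 1) + (n - R).choose k = n.choose k := by
  induction R with
  | zero => simp
  | succ R ih =>
    rw [← ih (by omega), sum_Icc_succ_top (by omega), add_assoc]
    congr 1
    obtain ⟨j, rfl⟩ := Nat.exists_eq_add_of_le' hk
    have : n - R = (n - (R + 1)) + 1 := by omega
    rw [this, Nat.choose_succ_succ]
    simp

lemma exists_cover_fam (n k : ℕ) (hk : 1 ≤ k) (R M : ℕ) (hR : R ≤ n)
    (hM : M ≤ ∑ i ∈ Icc 1 R, (n - i).choose (k - 1)) :
    ∃ G ⊆ (Icc 1 n).powersetCard k, G.card = M ∧ M ^ 2 ≤ R * totalInt G := by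
  set U := ((Icc 1 n).powersetCard k).filter fun A => (A ∩ Icc 1 R).Nonempty with hU
  have hUc : M ≤ U.card := by
    have h1 := card_filter_add_card_filter_not (s := (Icc 1 n).powersetCard k)
      (fun A => (A ∩ Icc 1 R).Nonempty)
    have h2 : (((Icc 1 n).powersetCard k).filter fun A => ¬ (A ∩ Icc 1 R).Nonempty).card
        ≤ (n - R).choose k := by
      have : (Icc (R + 1) n).card = n - R := by simp
      rw [← this, ← card_powersetCard]
      apply card_le_card
      intro A hA
      simp only [mem_filter, mem_powersetCard] at hA ⊢
      refine ⟨fun x hx => ?_, hA.1.2⟩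
      have hx1 := mem_Icc.1 (hA.1.1 hx)
      rw [mem_Icc]
      refine ⟨?_, hx1.2⟩
      by_contra hlt
      exact hA.2 ⟨x, mem_inter.2 ⟨hx, mem_Icc.2 ⟨hx1.1, by omega⟩⟩⟩
    have h3 := choose_tele n k hk R hR
    rw [card_powersetCard, Nat.card_Icc] at h1
    simp only [Nat.add_sub_cancel] at h1
    rw [← hU] at h1
    omega
  obtain ⟨G, hGU, hGc⟩ := exists_subset_card_eq hUc
  have hG : G ⊆ (Icc 1 n).powersetCard k := hGU.trans (filter_subset _ _)
  refine ⟨G, hG, hGc, ?_⟩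
  rw [totalInt_eq (Icc 1 n) G fun A hA => (mem_powersetCard.1 (hG hA)).1]
  have h1 : M ≤ ∑ x ∈ Icc 1 R, dg G x := by
    rw [sum_dg, ← hGc, card_eq_sum_ones]
    refine sum_le_sum fun A hA => ?_
    exact card_pos.2 (mem_filter.1 (hGU hA)).2
  calc M ^ 2 ≤ (∑ x ∈ Icc 1 R, dg G x) ^ 2 := Nat.pow_le_pow_left h1 2
    _ ≤ (Icc 1 R).card * ∑ x ∈ Icc 1 R, dg G x ^ 2 := sq_sum_le_card_mul_sum_sq
    _ ≤ _ := by
      rw [Nat.card_Icc, Nat.add_sub_cancel]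
      exact Nat.mul_le_mul_left _ (sum_le_sum_of_subset (Icc_subset_Icc_right hR))

lemma real_core (R P M D s Q : ℝ) (k : ℝ) (hk : 2 ≤ k) (hR : 1 ≤ R) (hD : 0 < D)
    (hM : 150 * k ^ 2 * R ^ 3 * D ≤ M) (hs1 : R + 1 ≤ s) (hs3 : s ≤ 3 * R)
    (h1 : s * (P - k * (s * D)) ≤ Q) (h2 : 2 * Q ≤ 2 * M + s ^ 2 * D)
    (hP : 0 ≤ P)
    (h3 : M ^ 2 ≤ R * (P * Q + s * D * (k * M))) : False := by
  have hM0 : 0 < M := lt_of_lt_of_le (by positivity) hM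
  -- normalise: e = R * k * s * D * ... 
  have hkD : 300 * R ^ 3 * (k * D) ≤ M := by
    refine le_trans ?_ hM
    have : 0 ≤ (k - 2) * (150 * k * R ^ 3 * D) := mul_nonneg (by linarith) (by positivity)
    nlinarith
  have hD2 : 600 * R ^ 3 * D ≤ M := by
    refine le_trans ?_ hkD
    have : 0 ≤ (k - 2) * (300 * R ^ 3 * D) := mul_nonneg (by linarith) (by positivity)
    nlinarith
  -- a := k s D * R^2 ≤ M / 100
  have ha : R ^ 2 * (k * (s * D)) ≤ M / 100 := by
    have : 0 ≤ (3 * R - s) * (R ^ 2 * k * D) := mul_nonneg (by linarith) (by positivity)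
    nlinarith
  have hs0 : 0 ≤ s := by linarith
  have hb : R * (s ^ 2 * D) ≤ M * (9 / 600) := by
    have : s ^ 2 ≤ (3 * R) ^ 2 := pow_le_pow_left₀ hs0 hs3 2
    have : 0 ≤ ((3 * R) ^ 2 - s ^ 2) * (R * D) := mul_nonneg (by linarith) (by positivity)
    nlinarith
  set a := k * (s * D) with hadef
  have hR0 : 0 < R := by linarith
  have ha0 : 0 ≤ a := by positivity
  have hQ : R * Q ≤ R * M + M * (9 / 1200) := by nlinarith
  -- (R+1) (P - a) ≤ Q
  have hQM : Q ≤ M * (1 + 9 / 1200) := by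
    have : M * (9 / 1200) ≤ R * (M * (9 / 1200)) := le_mul_of_one_le_left (by positivity) hR
    have : R * Q ≤ R * (M * (1 + 9 / 1200)) := by linarith
    exact le_of_mul_le_mul_left this hR0
  have h4 : P ≤ a ∨ (R + 1) * (P - a) ≤ Q := by
    rcases le_total P a with h | h
    · exact Or.inl h
    · right
      refine le_trans ?_ h1
      exact mul_le_mul_of_nonneg_right hs1 (by linarith)
  have haM : a ≤ M / 100 := by
    have : 1 ≤ R ^ 2 := one_le_pow₀ hR
    have : a ≤ R ^ 2 * a := le_mul_of_one_le_left ha0 this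
    linarith
  have h3' : M ^ 2 ≤ R * (P * Q) + R * a * M := by
    have : R * (P * Q + s * D * (k * M)) = R * (P * Q) + R * a * M := by rw [hadef]; ring
    linarith
  -- multiply by R (R+1)
  have h5 : R * M ^ 2 ≤ P * R * (R * Q) + M * (M / 100) := by
    have := mul_le_mul_of_nonneg_left h3' hR0.le
    have : M * (R ^ 2 * a) ≤ M * (M / 100) := mul_le_mul_of_nonneg_left ha hM0.le
    nlinarith
  have h6 : P * R * (R * Q) ≤ P * R * (M * (R + 9 / 1200)) :=
    mul_le_mul_of_nonneg_left (by linarith) (by positivity)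
  have hRP : (R + 1) * (R * P) ≤ R * M + M * (9 / 1200) + M / 50 := by
    have hRa : R * a * (R + 1) ≤ M / 50 := by
      have : R * a ≤ R * (R * a) := le_mul_of_one_le_left (by positivity) hR
      nlinarith
    rcases h4 with h | h
    · have : (R + 1) * (R * P) ≤ (R + 1) * (R * a) := by gcongr
      have : 0 ≤ R * M := by positivity
      nlinarith
    · have := mul_le_mul_of_nonneg_left h hR0.le
      nlinarith
  have h7 : R * M ≤ R * P * (R + 9 / 1200) + M / 100 := by
    have : M * (R * M) ≤ M * (R * P * (R + 9 / 1200) + M / 100) := by nlinarith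
    exact le_of_mul_le_mul_left this hM0
  have h8 : (R + 1) * (R * P) * (R + 9 / 1200) ≤ (R * M + M * (9 / 1200) + M / 50) * (R + 9 / 1200) :=
    mul_le_mul_of_nonneg_right hRP (by positivity)
  have h9 : (R + 1) * (R * M) ≤ (R + 1) * (R * P * (R + 9 / 1200) + M / 100) :=
    mul_le_mul_of_nonneg_left h7 (by positivity)
  have h10 : M * ((R + 1) * R) ≤ M * ((R + 9 / 1200 + 1 / 50) * (R + 9 / 1200) + (R + 1) / 100) := by
    nlinarith
  have h11 := le_of_mul_le_mul_left h10 hM0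
  nlinarith

lemma M_lower (k r n : ℕ) (hk : 2 ≤ k)
    (hn : 3000 * (r + 1) ^ 3 * (k + r) * k ^ 2 ≤ n)
    (δ : ℝ)
    (hδ : 150 * (k : ℝ) ^ 3 * ((r : ℝ) + 1) ^ 2 / (n : ℝ) ≤ δ) (M : ℝ)
    (hcard : M =
      (∑ i ∈ Icc 1 r, ((n - i).choose (k - 1) : ℝ)) + δ * ((n - (r + 1)).choose (k - 1) : ℝ)) :
    150 * (k : ℝ) ^ 2 * ((r : ℝ) + 1) ^ 3 * ((n - 2).choose (k - 2) : ℝ) ≤ M := by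
  have hkn : k ≤ n := by
    refine le_trans ?_ hn
    have h1 : 1 ≤ 3000 * (r + 1) ^ 3 * (k + r) :=
      Nat.one_le_iff_ne_zero.2 (by positivity)
    nlinarith
  have hn0 : (0 : ℝ) < n := by exact_mod_cast (by omega : 0 < n)
  have hδ0 : 0 ≤ δ := le_trans (by positivity) hδ
  have hid : (n : ℝ) * ((n - 2).choose (k - 2) : ℝ) ≤ k * ((n - 1).choose (k - 1) : ℝ) := by
    obtain ⟨j, rfl⟩ := Nat.exists_eq_add_of_le' hk
    obtain ⟨m, rfl⟩ := Nat.exists_eq_add_of_le' (hk.trans hkn)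
    have h := Nat.add_one_mul_choose_eq m j
    simp only [Nat.add_sub_cancel, show m + 2 - 1 = m + 1 by omega, show j + 2 - 1 = j + 1 by omega]
    have h2 : m.choose j ≤ (m + 1).choose (j + 1) := by
      rw [Nat.choose_succ_succ]; omega
    have : (m + 2) * m.choose j ≤ (j + 2) * (m + 1).choose (j + 1) := by nlinarith
    exact_mod_cast this
  set D := ((n - 2).choose (k - 2) : ℝ)
  set N := ((n - 1).choose (k - 1) : ℝ) with hN
  have hk0 : (0 : ℝ) < k := by positivity
  rcases Nat.eq_zero_or_pos r with rfl | hr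
  · simp only [CharP.cast_eq_zero, zero_add, one_pow, mul_one] at *
    simp only [show Icc 1 0 = (∅ : Finset ℕ) by simp, sum_empty, zero_add] at hcard
    rw [hcard]
    rw [div_le_iff₀ hn0] at hδ
    have hNn : 0 ≤ N := by positivity
    have : k * n * (150 * (k : ℝ) ^ 2 * D) ≤ k * n * (δ * N) := by
      calc k * n * (150 * (k : ℝ) ^ 2 * D) = 150 * k ^ 3 * (n * D) := by ring
        _ ≤ 150 * k ^ 3 * (k * N) := by gcongr
        _ = (150 * k ^ 3) * (k * N) := by ring
        _ ≤ (δ * n) * (k * N) := by gcongr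
        _ = _ := by ring
    exact le_of_mul_le_mul_left this (by positivity)
  · have hMN : N ≤ M := by
      have h1 : N ≤ ∑ i ∈ Icc 1 r, ((n - i).choose (k - 1) : ℝ) :=
        single_le_sum (f := fun i => ((n - i).choose (k - 1) : ℝ)) (fun i _ => by positivity)
          (mem_Icc.2 ⟨le_refl 1, hr⟩)
      have : 0 ≤ δ * ((n - (r + 1)).choose (k - 1) : ℝ) := by positivity
      linarith
    refine le_trans ?_ hMN
    have hn' : 3000 * ((r : ℝ) + 1) ^ 3 * (k + r) * k ^ 2 ≤ n := by exact_mod_cast hn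
    have hn'' : 150 * ((r : ℝ) + 1) ^ 3 * k * k ^ 2 ≤ n := by
      refine le_trans ?_ hn'
      gcongr <;> norm_num
    have : k * (150 * (k : ℝ) ^ 2 * ((r : ℝ) + 1) ^ 3 * D) ≤ k * N := by
      calc k * (150 * (k : ℝ) ^ 2 * ((r : ℝ) + 1) ^ 3 * D)
          = (150 * ((r : ℝ) + 1) ^ 3 * k * k ^ 2) * D := by ring
        _ ≤ n * D := by gcongr
        _ ≤ _ := hid
    exact le_of_mul_le_mul_left this hk0

set_option maxHeartbeats 2000000

/-- **Lemma.** If `F` is an optimal family (of the size in the main theorem for `t = 1`)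
containing no full `1`-star, then `F` has a cover of size `r + 1`. -/
theorem stmt8 (k r n : ℕ) (hk : 2 ≤ k)
    (hn : 3000 * (r + 1) ^ 3 * (k + r) * k ^ 2 ≤ n)
    (δ : ℝ)
    (hδ : (150 * (k : ℝ) ^ 3 * ((r : ℝ) + 1) ^ 2 / (n : ℝ) ≤ δ ∧
           δ ≤ 1 - 150 * (k : ℝ) ^ 3 * ((r : ℝ) + 1) ^ 3 / (n : ℝ)) ∨ δ = 1)
    (F : Finset (Finset ℕ)) (hF : F ⊆ (Icc 1 n).powersetCard k)
    (hcard : (F.card : ℝ) =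
      (∑ i ∈ Icc 1 r, ((n - i).choose (k - 1) : ℝ)) + δ * ((n - (r + 1)).choose (k - 1) : ℝ))
    (hopt : ∀ G ⊆ (Icc 1 n).powersetCard k, G.card = F.card → totalInt G ≤ totalInt F)
    (hnostar : ¬ ∃ x ∈ Icc 1 n, fullStar n k {x} ⊆ F) :
    ∃ A ⊆ Icc 1 n, A.card = r + 1 ∧ ∀ B ∈ F, (A ∩ B).Nonempty := by
  have hkn1 : (r + 1) * 10 * k ≤ n := by
    refine le_trans ?_ hn
    calc (r + 1) * 10 * k = (10 * (r + 1) ^ 1 * 1) * k ^ 1 := by ring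
      _ ≤ (3000 * (r + 1) ^ 3 * (k + r)) * k ^ 2 := by
        gcongr <;> omega
  have hRn : r + 1 ≤ n := by nlinarith
  have hkn : k ≤ n := by nlinarith
  have hn0 : (0 : ℝ) < n := by exact_mod_cast (by omega : 0 < n)
  have hn' : 3000 * ((r : ℝ) + 1) ^ 3 * (k + r) * k ^ 2 ≤ n := by exact_mod_cast hn
  have hkR : (2 : ℝ) ≤ k := by exact_mod_cast hk
  have hδ1 : 150 * (k : ℝ) ^ 3 * ((r : ℝ) + 1) ^ 2 / (n : ℝ) ≤ δ := by
    rcases hδ with h | h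
    · exact h.1
    · rw [h, div_le_one hn0]
      refine le_trans ?_ hn'
      calc 150 * (k : ℝ) ^ 3 * ((r : ℝ) + 1) ^ 2 = 150 * ((r : ℝ) + 1) ^ 2 * k * k ^ 2 := by ring
        _ ≤ _ := by
          gcongr <;> norm_num
  have hδ2 : δ ≤ 1 := by
    rcases hδ with h | h
    · refine h.2.trans ?_
      have : 0 ≤ 150 * (k : ℝ) ^ 3 * ((r : ℝ) + 1) ^ 3 / (n : ℝ) := by positivity
      linarith
    · exact h.le
  have hMD := M_lower k r n hk hn δ hδ1 _ hcard
  have hDpos : 0 < (n - 2).choose (k - 2) := Nat.choose_pos (by omega)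
  have hMle : F.card ≤ ∑ i ∈ Icc 1 (r + 1), (n - i).choose (k - 1) := by
    rw [sum_Icc_succ_top (by omega)]
    have : (F.card : ℝ) ≤ (∑ i ∈ Icc 1 r, ((n - i).choose (k - 1) : ℝ))
        + ((n - (r + 1)).choose (k - 1) : ℝ) := by
      rw [hcard]
      have : δ * ((n - (r + 1)).choose (k - 1) : ℝ) ≤ 1 * ((n - (r + 1)).choose (k - 1) : ℝ) := by
        gcongr
      linarith
    exact_mod_cast this
  have hIF : F.card ^ 2 ≤ (r + 1) * ∑ x ∈ Icc 1 n, dg F x ^ 2 := by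
    obtain ⟨G, hG, hGc, hGI⟩ := exists_cover_fam n k (by omega) (r + 1) F.card hRn hMle
    rw [← totalInt_eq (Icc 1 n) F fun A hA => (mem_powersetCard.1 (hF hA)).1]
    exact hGI.trans (Nat.mul_le_mul_left _ (hopt G hG hGc))
  have hsumV : ∑ x ∈ Icc 1 n, dg F x = k * F.card := by
    rw [sum_dg, mul_comm, ← smul_eq_mul, ← sum_const]
    refine sum_congr rfl fun A hA => ?_
    have := mem_powersetCard.1 (hF hA)
    rw [inter_eq_left.2 this.1, this.2]
  have hsumle := sum_dg_le n k hk F hF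
  have hmeet := meet_le n k hk F hF
  obtain ⟨x0, hx0, hmax⟩ := exists_max_image (Icc 1 n) (dg F) ⟨1, by simp; omega⟩
  have hw : ∀ A ∈ F, dg F x0 ≤ ∑ x ∈ A, dg F x := by
    intro A hA
    have : ∃ B ∈ fullStar n k {x0}, B ∉ F := by
      by_contra hcon
      push Not at hcon
      exact hnostar ⟨x0, hx0, hcon⟩
    obtain ⟨B, hB, hBF⟩ := this
    obtain ⟨hB1, hB2⟩ := mem_filter.1 hB
    refine le_trans ?_ (swap_le n k F hF hopt A B hA hB1 hBF)
    exact single_le_sum (f := dg F) (fun _ _ => Nat.zero_le _) (singleton_subset_iff.1 hB2)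
  set P := dg F x0 with hPdef
  set S := (Icc 1 n).filter fun x => P ≤ k * dg F x with hS
  have hcov : ∀ B ∈ F, (S ∩ B).Nonempty := by
    intro A hA
    by_contra hne
    rw [not_nonempty_iff_eq_empty] at hne
    have hA' := mem_powersetCard.1 (hF hA)
    have h1 : ∀ x ∈ A, k * dg F x < P := by
      intro x hx
      by_contra hlt
      have : x ∈ S ∩ A := mem_inter.2 ⟨mem_filter.2 ⟨hA'.1 hx, by omega⟩, hx⟩
      rw [hne] at this
      simp at this
    have h2 : ∑ x ∈ A, k * dg F x < ∑ x ∈ A, P :=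
      sum_lt_sum_of_nonempty (card_pos.1 (by omega)) h1
    rw [← mul_sum, sum_const, hA'.2, smul_eq_mul] at h2
    have := Nat.lt_of_mul_lt_mul_left h2
    have := hw A hA
    omega
  by_cases hsR : S.card ≤ r + 1
  · obtain ⟨T, hST, hTV, hTc⟩ := exists_subsuperset_card_eq (filter_subset _ _ : S ⊆ Icc 1 n) hsR
      (by simpa using hRn)
    exact ⟨T, hTV, hTc, fun B hB => (hcov B hB).mono (inter_subset_inter_right hST)⟩
  exfalso
  push Not at hsR
  -- real variables
  set D := (n - 2).choose (k - 2) with hDdef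
  set M := F.card with hMdef
  obtain ⟨R, hR⟩ : ∃ R : ℝ, R = (r : ℝ) + 1 := ⟨_, rfl⟩
  rw [← hR] at hMD
  have hR1 : 1 ≤ R := by rw [hR]; have : (0 : ℝ) ≤ r := by positivity
                         linarith
  have hR0 : 0 < R := by linarith
  have hD0 : (0 : ℝ) < D := by exact_mod_cast hDpos
  have hM0 : (0 : ℝ) < M := lt_of_lt_of_le (by positivity) hMD
  have hk0 : (0 : ℝ) < k := by linarith
  have hMD2 : 150 * (k : ℝ) ^ 2 * R ^ 2 * D ≤ M := by
    refine le_trans ?_ hMD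
    gcongr <;> norm_num
  have hMD1 : 150 * (k : ℝ) ^ 2 * R * D ≤ M := by
    refine le_trans ?_ hMD2
    have : R ≤ R ^ 2 := le_self_pow₀ hR1 (by norm_num)
    gcongr
  have hsumR : ∀ T : Finset ℕ, 2 * ∑ x ∈ T, (dg F x : ℝ) ≤ 2 * M + (T.card : ℝ) ^ 2 * D := by
    intro T; exact_mod_cast hsumle T
  have hbd : ∀ T : Finset ℕ, T.card ≤ (r + 1) * 10 * k →
      ∑ x ∈ T, (dg F x : ℝ) ≤ 4 / 3 * M := by
    intro T hT
    have h1 := hsumR T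
    have hT' : (T.card : ℝ) ≤ R * 10 * k := by rw [hR]; exact_mod_cast hT
    have h2 : (T.card : ℝ) ^ 2 * D ≤ (R * 10 * k) ^ 2 * D := by gcongr
    nlinarith
  set T := (Icc 1 n).filter fun x => 2 * (M : ℝ) < 15 * k * R * dg F x with hT
  have hTc : T.card ≤ (r + 1) * 10 * k := by
    by_contra hlt
    push Not at hlt
    obtain ⟨T', hT'T, hT'c⟩ := exists_subset_card_eq hlt.le
    have h1 := hbd T' hT'c.le
    have h2 : ∑ x ∈ T', (2 * (M : ℝ)) < ∑ x ∈ T', 15 * k * R * (dg F x : ℝ) := by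
      apply sum_lt_sum_of_nonempty
      · apply card_pos.1; rw [hT'c]; positivity
      · intro x hx
        exact (mem_filter.1 (hT'T hx)).2
    rw [sum_const, hT'c, nsmul_eq_mul, ← mul_sum] at h2
    push_cast at h2
    rw [← hR] at h2
    have h3 : 15 * k * R * ∑ x ∈ T', (dg F x : ℝ) ≤ 15 * k * R * (4 / 3 * M) := by gcongr
    linarith
  have hmaxR : ∀ x ∈ Icc 1 n, (dg F x : ℝ) ≤ P := fun x hx => by exact_mod_cast hmax x hx
  have hIFR : (M : ℝ) ^ 2 ≤ R * ∑ x ∈ Icc 1 n, (dg F x : ℝ) ^ 2 := by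
    rw [hR]; exact_mod_cast hIF
  have hsumVR : ∑ x ∈ Icc 1 n, (dg F x : ℝ) = k * M := by exact_mod_cast hsumV
  -- splitting bound
  have hsplit : ∀ (T : Finset ℕ) (τ : ℝ), T ⊆ Icc 1 n → 0 ≤ τ →
      (∀ x ∈ Icc 1 n, x ∉ T → (dg F x : ℝ) ≤ τ) →
      ∑ x ∈ Icc 1 n, (dg F x : ℝ) ^ 2 ≤ P * ∑ x ∈ T, (dg F x : ℝ) + τ * (k * M) := by
    intro T τ hTV hτ hx
    rw [← hsumVR, mul_sum, mul_sum, ← sum_sdiff hTV, add_comm]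
    apply add_le_add
    · refine sum_le_sum fun x hxT => ?_
      rw [sq]
      exact mul_le_mul_of_nonneg_right (hmaxR x (hTV hxT)) (by positivity)
    · calc _ ≤ ∑ x ∈ Icc 1 n \ T, τ * (dg F x : ℝ) := by
            refine sum_le_sum fun x hxT => ?_
            rw [sq]
            rw [mem_sdiff] at hxT
            exact mul_le_mul_of_nonneg_right (hx x hxT.1 hxT.2) (by positivity)
        _ ≤ _ := sum_le_sum_of_subset_of_nonneg sdiff_subset (fun _ _ _ => by positivity)
  have hP65 : 0.65 * M ≤ R * (P : ℝ) := by
    have h1 := hsplit T (2 * M / (15 * k * R)) (filter_subset _ _) (by positivity) (by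
      intro x hx hxT
      rw [le_div_iff₀ (by positivity)]
      by_contra hlt
      exact hxT (mem_filter.2 ⟨hx, by linarith⟩))
    have h2 := hbd T hTc
    have h3 : (P : ℝ) * ∑ x ∈ T, (dg F x : ℝ) ≤ P * (4 / 3 * M) := by gcongr
    have h4 : 2 * (M : ℝ) / (15 * k * R) * (k * M) = 2 / 15 * M ^ 2 / R := by
      field_simp
    rw [h4] at h1
    have h5 : (M : ℝ) ^ 2 ≤ R * (P * (4 / 3 * M) + 2 / 15 * M ^ 2 / R) := by
      refine hIFR.trans ?_
      gcongr
      linarith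
    have h6 : R * (P * (4 / 3 * M) + 2 / 15 * M ^ 2 / R) = M * (R * P * (4 / 3) + 2 / 15 * M) := by
      field_simp
    rw [h6, sq] at h5
    have h7 := le_of_mul_le_mul_left h5 hM0
    linarith
  have hST : S ⊆ T := by
    intro x hx
    obtain ⟨hx1, hx2⟩ := mem_filter.1 hx
    refine mem_filter.2 ⟨hx1, ?_⟩
    have hx2' : (P : ℝ) ≤ k * dg F x := by exact_mod_cast hx2
    have : R * P ≤ R * (k * dg F x) := by gcongr
    linarith
  have hsc : S.card ≤ (r + 1) * 10 * k := (card_le_card hST).trans hTc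
  have hsc' : (S.card : ℝ) ≤ R * 10 * k := by rw [hR]; exact_mod_cast hsc
  have hout : ∀ x, x ∉ S → (dg F x : ℝ) ≤ S.card * D := by
    intro x hx
    have h1 := hmeet S x hx
    have h2 : dg F x ≤ (F.filter fun A => x ∈ A ∧ (A ∩ S).Nonempty).card := by
      apply card_le_card
      intro A hA
      obtain ⟨hA1, hA2⟩ := mem_filter.1 hA
      refine mem_filter.2 ⟨hA1, hA2, ?_⟩
      rw [inter_comm]; exact hcov A hA1
    exact_mod_cast h2.trans h1
  have hke : 9.75 * (k * (S.card * (D : ℝ))) ≤ P := by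
    have h1 : k * (S.card * (D : ℝ)) ≤ k * (R * 10 * k * D) := by gcongr
    have h2 : R * (15 * (k * (S.card * (D : ℝ)))) ≤ M := by
      have : R * (15 * (k * (S.card * (D : ℝ)))) ≤ R * (15 * (k * (R * 10 * k * D))) := by gcongr
      linarith
    have h3 : R * (9.75 * (k * (S.card * (D : ℝ)))) ≤ R * P := by linarith
    exact le_of_mul_le_mul_left h3 hR0
  have hs0 : (0 : ℝ) < S.card := by
    have : 0 < S.card := by omega
    exact_mod_cast this
  have hSd : ∀ y ∈ S, (P : ℝ) - k * (S.card * D) ≤ dg F y := by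
    intro y hy
    obtain ⟨hy1, hy2⟩ := mem_filter.1 hy
    have hy2' : (P : ℝ) ≤ k * dg F y := by exact_mod_cast hy2
    have hlt : (S.card * (D : ℝ)) < dg F y := by
      have hpos : 0 < k * (S.card * (D : ℝ)) := by positivity
      have : k * (S.card * (D : ℝ)) < k * dg F y := by linarith
      exact lt_of_mul_lt_mul_left this hk0.le
    have hlt' : S.card * D < dg F y := by exact_mod_cast hlt
    have : ∃ A ∈ F, y ∈ A ∧ ¬ (A ∩ S.erase y).Nonempty := by
      by_contra hcon
      push Not at hcon
      have h1 := hmeet (S.erase y) y (notMem_erase _ _)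
      have h2 : dg F y ≤ (F.filter fun A => y ∈ A ∧ (A ∩ S.erase y).Nonempty).card := by
        apply card_le_card
        intro A hA
        obtain ⟨hA1, hA2⟩ := mem_filter.1 hA
        exact mem_filter.2 ⟨hA1, hA2, hcon A hA1 hA2⟩
      have h3 : (S.erase y).card * D ≤ S.card * D :=
        Nat.mul_le_mul_right _ (card_le_card (erase_subset _ _))
      omega
    obtain ⟨A, hA, hyA, hAS⟩ := this
    have h1 : (P : ℝ) ≤ ∑ x ∈ A, (dg F x : ℝ) := by exact_mod_cast hw A hA
    rw [← add_sum_erase _ _ hyA] at h1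
    have h2 : ∑ x ∈ A.erase y, (dg F x : ℝ) ≤ ∑ x ∈ A.erase y, (S.card * (D : ℝ)) := by
      refine sum_le_sum fun x hx => hout x fun hxS => hAS ⟨x, ?_⟩
      rw [mem_erase] at hx
      exact mem_inter.2 ⟨hx.2, mem_erase.2 ⟨hx.1, hxS⟩⟩
    rw [sum_const, nsmul_eq_mul] at h2
    have h3 : ((A.erase y).card : ℝ) ≤ k := by
      have := card_le_card (erase_subset y A)
      rw [(mem_powersetCard.1 (hF hA)).2] at this
      exact_mod_cast this
    have h4 : ((A.erase y).card : ℝ) * (S.card * D) ≤ k * (S.card * D) := by gcongr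
    linarith
  have hQlow : (S.card : ℝ) * (P - k * (S.card * D)) ≤ ∑ x ∈ S, (dg F x : ℝ) := by
    rw [← nsmul_eq_mul, ← sum_const]
    exact sum_le_sum hSd
  have hs3 : (S.card : ℝ) ≤ 3 * R := by
    have h1 := hbd S hsc
    have h2 : (S.card : ℝ) * (0.89 * P) ≤ S.card * (P - k * (S.card * D)) := by
      gcongr; linarith
    have h3 : (S.card : ℝ) * (0.89 * P) ≤ 4 / 3 * M := by linarith
    have h4 : (S.card : ℝ) * (0.89 * (0.65 * M)) ≤ S.card * (0.89 * (R * P)) := by gcongr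
    have h5 : R * (S.card * (0.89 * P)) ≤ R * (4 / 3 * M) := by gcongr
    have h6 : M * ((S.card : ℝ) * (0.89 * 0.65)) ≤ M * (R * (4 / 3)) := by linarith
    have h7 := le_of_mul_le_mul_left h6 hM0
    linarith
  have hs1 : R + 1 ≤ S.card := by
    rw [hR]; exact_mod_cast hsR
  refine real_core R P M D S.card (∑ x ∈ S, (dg F x : ℝ)) k hkR hR1 hD0 hMD hs1 hs3 hQlow
    (hsumR S) (by positivity) ?_
  refine hIFR.trans ?_
  gcongr
  exact hsplit S (S.card * D) (filter_subset _ _) (by positivity) fun x _ hx => hout x hx
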